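/- Let A be a commutative local ring with maximal ideal m, and let B be a commutative ring containing A as a subring. Write M = mB, and suppose n0 ≥ 1 is such that M^{n0} is contained in the image of m in B. Suppose moreover that there exists n1 such that for all n ≥ n1, every f ∈ m^n satisfying f^j ∈ m^{nj+1} for some j ≥ 1 lies in m^{n+1}. Then for all n ≥ n1 the natural map ν_n : m^n/m^{n+1} → M^n/M^{n+1} is injective; explicitly, m^n ∩ M^{n+1} = m^{n+1} as A-submodules of B. -/

import Mathlib

open IsLocalRing Submodule

/-!
If `f ∈ I ^ n` has image in `(I B) ^ (n + 1)`, then `f ^ n0` has image in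
`(I B) ^ (n * n0 + n0) = I ^ (n * n0) • (I B) ^ n0`. Since `(I B) ^ n0` is contained in the image
of `I`, this product is contained in the image of `I ^ (n * n0 + 1)`: the class of `f` in degree
`n` of the associated graded ring is nilpotent.
-/

section

variable {A B : Type*} [CommSemiring A] [CommSemiring B] [Algebra A B]

lemma restrictScalars_map_smul_le_map_smul {N P : Type*} [AddCommMonoid N] [Module A N]
    [AddCommMonoid P] [Module A P] [Module B P] [IsScalarTower A B P] (g : N →ₗ[A] P)
    (I : Ideal A) {K : Submodule B P} {L : Submodule A N}
    (hKL : K.restrictScalars A ≤ L.map g) :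
    (I.map (algebraMap A B) • K).restrictScalars A ≤ (I • L).map g := by
  rw [Ideal.smul_restrictScalars, map_smul'']
  exact smul_mono_right I hKL

lemma map_linearMap_le_restrictScalars_map (I : Ideal A) :
    Submodule.map (Algebra.linearMap A B) I ≤ (I.map (algebraMap A B)).restrictScalars A :=
  map_le_iff_le_comap.mpr fun _ => Ideal.mem_map_of_mem (algebraMap A B)

variable {I : Ideal A} {n0 : ℕ}

lemma restrictScalars_map_pow_add_le
    (h : ((I.map (algebraMap A B)) ^ n0).restrictScalars A ≤
      Submodule.map (Algebra.linearMap A B) I) (k : ℕ) :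
    ((I.map (algebraMap A B)) ^ (k + n0)).restrictScalars A ≤
      Submodule.map (Algebra.linearMap A B) (I ^ (k + 1)) := by
  rw [pow_add, ← Ideal.map_pow, pow_succ]
  exact restrictScalars_map_smul_le_map_smul (Algebra.linearMap A B) (I ^ k) h

lemma pow_mem_pow_of_algebraMap_mem_map_pow (hinj : Function.Injective (algebraMap A B))
    (h : ((I.map (algebraMap A B)) ^ n0).restrictScalars A ≤
      Submodule.map (Algebra.linearMap A B) I)
    {n : ℕ} {f : A} (hf : algebraMap A B f ∈ (I.map (algebraMap A B)) ^ (n + 1)) :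
    f ^ n0 ∈ I ^ (n * n0 + 1) := by
  have hpow : algebraMap A B (f ^ n0) ∈ (I.map (algebraMap A B)) ^ (n * n0 + n0) := by
    rw [map_pow, ← Nat.succ_mul, pow_mul]
    exact Ideal.pow_mem_pow hf n0
  obtain ⟨g, hg, hgf⟩ := restrictScalars_map_pow_add_le h (n * n0) hpow
  exact hinj hgf ▸ hg

theorem stmt5_general (hinj : Function.Injective (algebraMap A B))
    (h : ((I.map (algebraMap A B)) ^ n0).restrictScalars A ≤
      Submodule.map (Algebra.linearMap A B) I)
    {n : ℕ} (hred : ∀ f ∈ I ^ n, f ^ n0 ∈ I ^ (n * n0 + 1) → f ∈ I ^ (n + 1)) :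
    Submodule.map (Algebra.linearMap A B) (I ^ n) ⊓
        ((I.map (algebraMap A B)) ^ (n + 1)).restrictScalars A =
      Submodule.map (Algebra.linearMap A B) (I ^ (n + 1)) := by
  apply le_antisymm
  · rintro _ ⟨⟨f, hf, rfl⟩, hfM⟩
    exact mem_map_of_mem (hred f hf (pow_mem_pow_of_algebraMap_mem_map_pow hinj h hfM))
  · refine le_inf (map_mono (Ideal.pow_le_pow_right n.le_succ)) ?_
    rw [← Ideal.map_pow]
    exact map_linearMap_le_restrictScalars_map (I ^ (n + 1))

end

/-- `A` local, `B ⊇ A`, `M = mB`, `n0 ≥ 1` with `M^{n0}` contained in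
the image of `m`, and no nonzero nilpotent classes in components of degree `≥ n1`
of `G(A)`. Then for every `n ≥ n1`, `ν_n` is injective, i.e.
`m^n ∩ M^{n+1} = m^{n+1}` as `A`-submodules of `B`. -/
theorem stmt5 (A B : Type*) [CommRing A] [IsLocalRing A]
    [CommRing B] [Algebra A B]
    (hinj : Function.Injective (algebraMap A B))
    (n0 : ℕ) (hn0 : 1 ≤ n0)
    (h : (((maximalIdeal A).map (algebraMap A B)) ^ n0).restrictScalars A ≤
      Submodule.map (Algebra.linearMap A B) (maximalIdeal A : Submodule A A))
    (n1 : ℕ)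
    (hred : ∀ n ≥ n1, ∀ f ∈ maximalIdeal A ^ n,
      (∃ j ≥ 1, f ^ j ∈ maximalIdeal A ^ (n * j + 1)) → f ∈ maximalIdeal A ^ (n + 1)) :
    ∀ n ≥ n1,
      Submodule.map (Algebra.linearMap A B) (maximalIdeal A ^ n : Ideal A) ⊓
          ((((maximalIdeal A).map (algebraMap A B)) ^ (n + 1)).restrictScalars A) =
        Submodule.map (Algebra.linearMap A B) (maximalIdeal A ^ (n + 1) : Ideal A) :=
  fun n hn => stmt5_general hinj h fun f hf hpow => hred n hn f hf ⟨n0, hn0, hpow⟩
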